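/- arXiv:2103.14246 — 2 statements merged into one kernel-verified Lean document; each statement's English description precedes it below -/
import Mathlib

section
/- Suppose the value-function approximation Ṽ is quadratic, i.e., Ṽ(x) = c + ⟨b, x⟩ + ½⟨x, A x⟩ with A symmetric. Let Z̃ := Σ(X)ᵀ∇Ṽ(X') and define the Euler–Maruyama estimator ΔŶ^em := −L(X) + ⟨Z̃, W⟩. Then its residual error satisfies, almost surely, ΔY − ΔŶ^em = δ^Ṽ − E[δ^Ṽ | 𝒢] + ⟨Z̄ − Z̃, W⟩ + ½ tr(M̄ (W Wᵀ − I)). -/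
open MeasureTheory ProbabilityTheory Matrix

/-- The standard Gaussian measure on `ℝⁿ` (coordinates i.i.d. `N(0,1)`). -/
noncomputable def stdGaussian (n : ℕ) : Measure (Fin n → ℝ) :=
  Measure.pi fun _ => gaussianReal 0 1

/-- The gradient of `f : ℝⁿ → ℝ`, as a vector of partial derivatives. -/
noncomputable def grad {n : ℕ} (f : (Fin n → ℝ) → ℝ) (x : Fin n → ℝ) : Fin n → ℝ :=
  fun i => fderiv ℝ f x (Pi.single i 1)

/-- The Hessian matrix of `f : ℝⁿ → ℝ`. -/
noncomputable def hess {n : ℕ} (f : (Fin n → ℝ) → ℝ) (x : Fin n → ℝ) :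
    Matrix (Fin n) (Fin n) ℝ :=
  Matrix.of fun i j => fderiv ℝ (fun y => fderiv ℝ f y (Pi.single j 1)) x (Pi.single i 1)

/-!
Since `Ṽ` is quadratic, its second-order Taylor expansion at `X̄` is exact, so
`Ṽ(X') = Ṽ(X̄) + ⟨Z̄, W⟩ + ½ ⟨W, M̄ W⟩`. As `X` is `𝒢`-measurable and `W` is independent of `𝒢`,
conditioning on `𝒢` freezes `X` and integrates out `W`: this gives
`E[Ṽ(X') | 𝒢] = Ṽ(X̄) + ½ tr M̄`, because `W` is centred with identity covariance, and
`E[V'(X') | 𝒢] = V(X) - L(X)`, by the Bellman equation. Subtracting,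
`V(X) - L(X) = E[δ^Ṽ | 𝒢] + Ṽ(X̄) + ½ tr M̄`, and the claim is a rearrangement in which the term
`⟨Z̃, W⟩` occurs identically on both sides.
-/

section Conditioning

variable {Ω β γ : Type*} {𝒢 : MeasurableSpace Ω} [mΩ : MeasurableSpace Ω]
  [MeasurableSpace β] [mγ : MeasurableSpace γ] {P : Measure Ω} [IsFiniteMeasure P]
  {X : Ω → β} {W : Ω → γ}

lemma map_prodMk_restrict_eq_prod_of_indep (h𝒢 : 𝒢 ≤ mΩ) (hX : Measurable[𝒢] X)
    (hW : Measurable W) (hindep : Indep (mγ.comap W) 𝒢 P) {s : Set Ω}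
    (hs : MeasurableSet[𝒢] s) :
    (P.restrict s).map (fun ω => (X ω, W ω)) = ((P.restrict s).map X).prod (P.map W) := by
  have hX' : Measurable X := hX.mono h𝒢 le_rfl
  refine (Measure.prod_eq fun A B hA hB => ?_).symm
  rw [Measure.map_apply (hX'.prodMk hW) (hA.prod hB), Measure.map_apply hX' hA,
    Measure.map_apply hW hB, Measure.restrict_apply (hX'.prodMk hW (hA.prod hB)),
    Measure.restrict_apply (hX' hA), mul_comm,
    ← (Indep_iff _ _ _).1 hindep _ _ ⟨B, hB, rfl⟩ ((hX hA).inter hs), Set.mk_preimage_prod]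
  congr 1
  ext ω
  simp only [Set.mem_inter_iff]
  tauto

theorem condExp_comp_prodMk_of_indep {E : Type*} [NormedAddCommGroup E] [NormedSpace ℝ E]
    [CompleteSpace E] (h𝒢 : 𝒢 ≤ mΩ) (hX : Measurable[𝒢] X) (hW : Measurable W)
    (hindep : Indep (mγ.comap W) 𝒢 P) {f : β × γ → E} (hf : StronglyMeasurable f)
    (hint : Integrable (fun ω => f (X ω, W ω)) P) :
    P[fun ω => f (X ω, W ω)|𝒢] =ᵐ[P] fun ω => ∫ w, f (X ω, w) ∂(P.map W) := by
  have hX' : Measurable X := hX.mono h𝒢 le_rfl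
  have hg : StronglyMeasurable fun x => ∫ w, f (x, w) ∂(P.map W) := hf.integral_prod_right'
  have hf_prod : ∀ s, MeasurableSet[𝒢] s →
      Integrable f (((P.restrict s).map X).prod (P.map W)) := fun s hs => by
    rw [← map_prodMk_restrict_eq_prod_of_indep h𝒢 hX hW hindep hs]
    exact (integrable_map_measure hf.aestronglyMeasurable (hX'.prodMk hW).aemeasurable).2
      hint.integrableOn
  refine (ae_eq_condExp_of_forall_setIntegral_eq h𝒢 hint (fun s hs _ => ?_) (fun s hs _ => ?_)
    (hg.comp_measurable hX).aestronglyMeasurable).symm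
  · exact (hf_prod s hs).integral_prod_left.comp_measurable hX'
  · calc ∫ ω in s, ∫ w, f (X ω, w) ∂(P.map W) ∂P
      _ = ∫ x, ∫ w, f (x, w) ∂(P.map W) ∂((P.restrict s).map X) :=
        (integral_map hX'.aemeasurable hg.aestronglyMeasurable).symm
      _ = ∫ p, f p ∂((P.restrict s).map fun ω => (X ω, W ω)) := by
        rw [map_prodMk_restrict_eq_prod_of_indep h𝒢 hX hW hindep hs,
          integral_prod _ (hf_prod s hs)]
      _ = ∫ ω in s, f (X ω, W ω) ∂P :=
        integral_map (hX'.prodMk hW).aemeasurable hf.aestronglyMeasurable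

end Conditioning

section Moments

variable {ι : Type*} [DecidableEq ι]

/-- A measure on `ℝ^ι` is standardized if its coordinates are square integrable and centred, with
identity covariance matrix, as for standard Gaussian noise or i.i.d. random signs. -/
structure IsStandardized (μ : Measure (ι → ℝ)) : Prop where
  memLp_eval : ∀ i, MemLp (fun w => w i) 2 μ
  integral_eval : ∀ i, ∫ w, w i ∂μ = 0
  integral_eval_mul_eval : ∀ i j, ∫ w, w i * w j ∂μ = (1 : Matrix ι ι ℝ) i j

namespace IsStandardized

variable {μ : Measure (ι → ℝ)}

lemma integrable_eval [IsFiniteMeasure μ] (hμ : IsStandardized μ) (i : ι) :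
    Integrable (fun w => w i) μ :=
  (hμ.memLp_eval i).integrable one_le_two

lemma integrable_eval_mul_eval (hμ : IsStandardized μ) (i j : ι) :
    Integrable (fun w => w i * w j) μ :=
  (hμ.memLp_eval i).integrable_mul (hμ.memLp_eval j)

variable [Fintype ι]

lemma integrable_dotProduct [IsFiniteMeasure μ] (hμ : IsStandardized μ) (z : ι → ℝ) :
    Integrable (fun w => z ⬝ᵥ w) μ :=
  integrable_finsetSum _ fun i _ => (hμ.integrable_eval i).const_mul (z i)

lemma integral_dotProduct [IsFiniteMeasure μ] (hμ : IsStandardized μ) (z : ι → ℝ) :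
    ∫ w, z ⬝ᵥ w ∂μ = 0 := by
  simp only [dotProduct]
  rw [integral_finsetSum _ fun i _ => (hμ.integrable_eval i).const_mul (z i)]
  simp [integral_const_mul, hμ.integral_eval]

lemma integrable_dotProduct_mulVec (hμ : IsStandardized μ) (M : Matrix ι ι ℝ) :
    Integrable (fun w => w ⬝ᵥ M *ᵥ w) μ := by
  simp only [dotProduct, mulVec, Finset.mul_sum, mul_left_comm _ (M _ _)]
  exact integrable_finsetSum _ fun i _ => integrable_finsetSum _ fun j _ =>
    (hμ.integrable_eval_mul_eval i j).const_mul (M i j)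

theorem integral_dotProduct_mulVec (hμ : IsStandardized μ) (M : Matrix ι ι ℝ) :
    ∫ w, w ⬝ᵥ M *ᵥ w ∂μ = M.trace := by
  have hint (i j : ι) : Integrable (fun w => M i j * (w i * w j)) μ :=
    (hμ.integrable_eval_mul_eval i j).const_mul (M i j)
  calc ∫ w, w ⬝ᵥ M *ᵥ w ∂μ
    _ = ∫ w, ∑ i, ∑ j, M i j * (w i * w j) ∂μ := by
      simp only [dotProduct, mulVec, Finset.mul_sum, mul_left_comm _ (M _ _)]
    _ = ∑ i, ∑ j, M i j * ∫ w, w i * w j ∂μ := by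
      rw [integral_finsetSum _ fun i _ => integrable_finsetSum _ fun j _ => hint i j]
      simp only [integral_finsetSum _ fun j _ => hint _ j, integral_const_mul]
    _ = M.trace := by simp [hμ.integral_eval_mul_eval, one_apply, trace]

theorem integral_quadratic [IsProbabilityMeasure μ] (hμ : IsStandardized μ) (a : ℝ) (z : ι → ℝ)
    (M : Matrix ι ι ℝ) :
    ∫ w, (a + z ⬝ᵥ w + 1 / 2 * (w ⬝ᵥ M *ᵥ w)) ∂μ = a + 1 / 2 * M.trace := by
  have haffine : Integrable (fun w => a + z ⬝ᵥ w) μ :=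
    (integrable_const a).add (hμ.integrable_dotProduct z)
  rw [integral_add haffine ((hμ.integrable_dotProduct_mulVec M).const_mul _),
    integral_add (integrable_const a) (hμ.integrable_dotProduct z), integral_const_mul,
    hμ.integral_dotProduct, hμ.integral_dotProduct_mulVec]
  simp

end IsStandardized

theorem isStandardized_pi [Fintype ι] {ν : ι → Measure ℝ} [∀ i, IsProbabilityMeasure (ν i)]
    (hν : ∀ i, MemLp id 2 (ν i)) (hmean : ∀ i, ∫ x, x ∂(ν i) = 0)
    (hvar : ∀ i, ∫ x, x ^ 2 ∂(ν i) = 1) : IsStandardized (Measure.pi ν) := by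
  have hmemLp (i : ι) : MemLp (fun w => w i) 2 (Measure.pi ν) :=
    (hν i).comp_measurePreserving (measurePreserving_eval ν i)
  have hmean_eval (i : ι) : ∫ w, w i ∂(Measure.pi ν) = 0 :=
    (integral_comp_eval (hν i).aestronglyMeasurable).trans (hmean i)
  refine ⟨hmemLp, hmean_eval, fun i j => ?_⟩
  rcases eq_or_ne i j with rfl | hij
  · simp only [← pow_two, one_apply_eq]
    exact (integral_comp_eval (μ := ν) (f := fun x => x ^ 2)
      (continuous_pow 2).aestronglyMeasurable).trans (hvar i)
  · have hindep : IndepFun (fun w : ι → ℝ => w i) (fun w => w j) (Measure.pi ν) :=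
      (iIndepFun_pi (X := fun _ => id) fun _ => aemeasurable_id).indepFun hij
    rw [hindep.integral_fun_mul_eq_mul_integral (hmemLp i).aestronglyMeasurable
      (hmemLp j).aestronglyMeasurable, hmean_eval, zero_mul, one_apply_ne hij]

theorem isStandardized_stdGaussian (n : ℕ) : IsStandardized (_root_.stdGaussian n) := by
  have hvar : ∫ x, x ^ 2 ∂(gaussianReal 0 1) = 1 := by
    simpa [variance_eq_integral measurable_id.aemeasurable] using
      variance_id_gaussianReal (μ := 0) (v := 1)
  exact isStandardized_pi (fun _ => memLp_id_gaussianReal' 2 (by simp))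
    (fun _ => integral_id_gaussianReal) fun _ => hvar

end Moments

section Quadratic

variable {ι : Type*} [Fintype ι] (c : ℝ) (b : ι → ℝ) (A : Matrix ι ι ℝ)

/-- The quadratic function `x ↦ c + ⟨b, x⟩ + ½ ⟨x, A x⟩` on `ℝ^ι`; since `A` need not be
symmetric, its Hessian is `½ (A + Aᵀ)`. -/
noncomputable def quadraticFn (x : ι → ℝ) : ℝ :=
  c + b ⬝ᵥ x + 1 / 2 * (x ⬝ᵥ A *ᵥ x)

lemma contDiff_quadraticFn {k : WithTop ℕ∞} : ContDiff ℝ k (quadraticFn c b A) := by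
  unfold quadraticFn
  simp only [mulVec, dotProduct]
  fun_prop

lemma quadraticFn_add (x v : ι → ℝ) :
    quadraticFn c b A (x + v) =
      quadraticFn c b A x + (b + ((1 / 2 : ℝ) • (A + Aᵀ)) *ᵥ x) ⬝ᵥ v + 1 / 2 * (v ⬝ᵥ A *ᵥ v) := by
  have hvx : v ⬝ᵥ A *ᵥ x = A *ᵥ x ⬝ᵥ v := dotProduct_comm _ _
  have hxv : x ⬝ᵥ A *ᵥ v = Aᵀ *ᵥ x ⬝ᵥ v := by rw [dotProduct_mulVec, mulVec_transpose]
  simp only [quadraticFn, mulVec_add, dotProduct_add, add_dotProduct, hvx, hxv, smul_mulVec,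
    add_mulVec, smul_dotProduct, smul_eq_mul]
  ring

lemma fderiv_quadraticFn_apply (x v : ι → ℝ) :
    fderiv ℝ (quadraticFn c b A) x v = (b + ((1 / 2 : ℝ) • (A + Aᵀ)) *ᵥ x) ⬝ᵥ v := by
  set g := (b + ((1 / 2 : ℝ) • (A + Aᵀ)) *ᵥ x) ⬝ᵥ v
  have hline : HasDerivAt (fun t : ℝ => quadraticFn c b A (x + t • v)) g 0 := by
    have hpoly := (((hasDerivAt_id (0 : ℝ)).mul_const g).const_add (quadraticFn c b A x)).add
      ((hasDerivAt_pow 2 (0 : ℝ)).mul_const (1 / 2 * (v ⬝ᵥ A *ᵥ v)))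
    refine (hpoly.congr_deriv (by simp)).congr_of_eventuallyEq (.of_forall fun t => ?_)
    simp only [quadraticFn_add, mulVec_smul, dotProduct_smul, smul_dotProduct, smul_eq_mul,
      Pi.add_apply, id_eq, g]
    ring
  have hdiff : DifferentiableAt ℝ (quadraticFn c b A) x :=
    (contDiff_quadraticFn c b A).differentiable one_ne_zero x
  rw [← hdiff.lineDeriv_eq_fderiv]
  exact hline.deriv

end Quadratic

section QuadraticTaylor

variable {n : ℕ} (c : ℝ) (b : Fin n → ℝ) (A : Matrix (Fin n) (Fin n) ℝ)

lemma grad_quadraticFn (x : Fin n → ℝ) :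
    grad (quadraticFn c b A) x = b + ((1 / 2 : ℝ) • (A + Aᵀ)) *ᵥ x := by
  ext i
  rw [grad, fderiv_quadraticFn_apply, dotProduct_single_one]

lemma hess_quadraticFn (x : Fin n → ℝ) :
    hess (quadraticFn c b A) x = (1 / 2 : ℝ) • (A + Aᵀ) := by
  set H := (1 / 2 : ℝ) • (A + Aᵀ) with hH
  have hsymm : H.IsSymm := by simp [hH, IsSymm, add_comm]
  ext i j
  have hpartial : (fun y => fderiv ℝ (quadraticFn c b A) y (Pi.single j 1)) =
      fun y => b j + (H *ᵥ y) j := by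
    ext y
    rw [fderiv_quadraticFn_apply, dotProduct_single_one, Pi.add_apply]
  have hderiv : HasFDerivAt (fun y => b j + (H *ᵥ y) j)
      (ContinuousLinearMap.proj (R := ℝ) (φ := fun _ : Fin n => ℝ) j ∘L
        H.mulVecLin.toContinuousLinearMap) x :=
    (ContinuousLinearMap.proj (R := ℝ) (φ := fun _ : Fin n => ℝ) j ∘L
      H.mulVecLin.toContinuousLinearMap).hasFDerivAt.const_add (b j)
  rw [hess, of_apply, hpartial, hderiv.fderiv]
  simp [hsymm.apply]

theorem quadraticFn_add_eq_taylor (x v : Fin n → ℝ) :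
    quadraticFn c b A (x + v) = quadraticFn c b A x + grad (quadraticFn c b A) x ⬝ᵥ v +
      1 / 2 * (v ⬝ᵥ hess (quadraticFn c b A) x *ᵥ v) := by
  have hAt : v ⬝ᵥ Aᵀ *ᵥ v = v ⬝ᵥ A *ᵥ v := dotProduct_transpose_mulVec A v v
  rw [quadraticFn_add, grad_quadraticFn, hess_quadraticFn]
  simp only [smul_mulVec, add_mulVec, dotProduct_smul, dotProduct_add, hAt, smul_eq_mul]
  ring

theorem quadraticFn_add_mulVec {ι : Type*} [Fintype ι] (x : Fin n → ℝ)
    (T : Matrix (Fin n) ι ℝ) (w : ι → ℝ) :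
    quadraticFn c b A (x + T *ᵥ w) =
      quadraticFn c b A x + (Tᵀ *ᵥ grad (quadraticFn c b A) x) ⬝ᵥ w +
        1 / 2 * (w ⬝ᵥ (Tᵀ * hess (quadraticFn c b A) x * T) *ᵥ w) := by
  have hlin (g : Fin n → ℝ) : g ⬝ᵥ T *ᵥ w = (Tᵀ *ᵥ g) ⬝ᵥ w := by
    rw [dotProduct_mulVec, mulVec_transpose]
  have hquad (H : Matrix (Fin n) (Fin n) ℝ) :
      T *ᵥ w ⬝ᵥ H *ᵥ T *ᵥ w = w ⬝ᵥ (Tᵀ * H * T) *ᵥ w := by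
    rw [dotProduct_comm, hlin, dotProduct_comm, mulVec_mulVec, mulVec_mulVec, Matrix.mul_assoc]
  rw [quadraticFn_add_eq_taylor, hlin, hquad]

end QuadraticTaylor

lemma trace_mul_vecMulVec_self_sub_one {ι R : Type*} [Fintype ι] [DecidableEq ι] [CommRing R]
    (M : Matrix ι ι R) (w : ι → R) :
    (M * (vecMulVec w w - 1)).trace = w ⬝ᵥ M *ᵥ w - M.trace := by
  rw [Matrix.mul_sub, Matrix.mul_one, trace_sub, mul_vecMulVec, trace_vecMulVec, dotProduct_comm]

section EulerMaruyama

/-- One Euler–Maruyama step `x ↦ x + F(x) + S(x) w` with drift `F`, diffusion `S` and noise `w`;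
the noise may have a dimension different from that of the state. -/
def eulerStep {κ ι : Type*} [Fintype ι] (F : (κ → ℝ) → κ → ℝ) (S : (κ → ℝ) → Matrix κ ι ℝ)
    (x : κ → ℝ) (w : ι → ℝ) : κ → ℝ :=
  x + F x + S x *ᵥ w

lemma measurable_eulerStep {κ ι : Type*} [Fintype ι] {F : (κ → ℝ) → κ → ℝ}
    {S : (κ → ℝ) → Matrix κ ι ℝ} (hF : Measurable F)
    (hS : ∀ i j, Measurable fun x => S x i j) :
    Measurable fun p : (κ → ℝ) × (ι → ℝ) => eulerStep F S p.1 p.2 := by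
  have hSw : Measurable fun p : (κ → ℝ) × (ι → ℝ) => S p.1 *ᵥ p.2 := by
    refine measurable_pi_lambda _ fun i => ?_
    simp only [mulVec, dotProduct]
    fun_prop
  unfold eulerStep
  fun_prop

variable {Ω ι : Type*} {𝒢 : MeasurableSpace Ω} [mΩ : MeasurableSpace Ω] {P : Measure Ω}
  [Fintype ι] {W : Ω → ι → ℝ}

theorem condExp_comp_eulerStep {κ : Type*} [IsFiniteMeasure P] (h𝒢 : 𝒢 ≤ mΩ) (hW : Measurable W)
    (hindep : Indep (MeasurableSpace.comap W inferInstance) 𝒢 P) {X : Ω → κ → ℝ}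
    (hX : Measurable[𝒢] X) {F : (κ → ℝ) → κ → ℝ} (hF : Measurable F)
    {S : (κ → ℝ) → Matrix κ ι ℝ} (hS : ∀ i j, Measurable fun x => S x i j)
    {φ : (κ → ℝ) → ℝ} (hφ : Measurable φ)
    (hint : Integrable (fun ω => φ (eulerStep F S (X ω) (W ω))) P) :
    P[fun ω => φ (eulerStep F S (X ω) (W ω))|𝒢] =ᵐ[P]
      fun ω => ∫ w, φ (eulerStep F S (X ω) w) ∂(P.map W) :=
  condExp_comp_prodMk_of_indep (f := fun p => φ (eulerStep F S p.1 p.2)) h𝒢 hX hW hindep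
    (hφ.comp (measurable_eulerStep hF hS)).stronglyMeasurable hint

theorem IsStandardized.integral_quadraticFn_eulerStep [DecidableEq ι] {μ : Measure (ι → ℝ)}
    [IsProbabilityMeasure μ] (hμ : IsStandardized μ) {n : ℕ} (F : (Fin n → ℝ) → Fin n → ℝ)
    (S : (Fin n → ℝ) → Matrix (Fin n) ι ℝ) (c : ℝ) (b : Fin n → ℝ)
    (A : Matrix (Fin n) (Fin n) ℝ) (x : Fin n → ℝ) :
    ∫ w, quadraticFn c b A (eulerStep F S x w) ∂μ = quadraticFn c b A (x + F x) +
      1 / 2 * ((S x)ᵀ * hess (quadraticFn c b A) (x + F x) * S x).trace := by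
  simp only [eulerStep, quadraticFn_add_mulVec, hμ.integral_quadratic]

theorem euler_maruyama_residual_quadratic_general [DecidableEq ι] [IsProbabilityMeasure P]
    {n : ℕ} (h𝒢 : 𝒢 ≤ mΩ) (hW : Measurable W) {μ : Measure (ι → ℝ)} (hWlaw : P.map W = μ)
    (hμ : IsStandardized μ)
    (hindep : Indep (MeasurableSpace.comap W inferInstance) 𝒢 P)
    {X : Ω → Fin n → ℝ} (hX : Measurable[𝒢] X)
    {F : (Fin n → ℝ) → Fin n → ℝ} (hF : Measurable F)
    {S : (Fin n → ℝ) → Matrix (Fin n) ι ℝ} (hS : ∀ i j, Measurable fun x => S x i j)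
    {L : (Fin n → ℝ) → ℝ} {Xb : Ω → Fin n → ℝ} (hXb : ∀ ω, Xb ω = X ω + F (X ω))
    {X' : Ω → Fin n → ℝ} (hX' : ∀ ω, X' ω = Xb ω + S (X ω) *ᵥ W ω)
    {V' : (Fin n → ℝ) → ℝ} (hV'meas : Measurable V')
    (hV'int : Integrable (fun ω => V' (X' ω)) P)
    {V : (Fin n → ℝ) → ℝ} (hV : ∀ x, V x = L x + ∫ w, V' (x + F x + S x *ᵥ w) ∂μ)
    {Vt : (Fin n → ℝ) → ℝ} {c : ℝ} {b : Fin n → ℝ} {A : Matrix (Fin n) (Fin n) ℝ}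
    (hVtquad : ∀ x, Vt x = c + (∑ i, b i * x i) + (1 / 2) * ∑ i, x i * A.mulVec x i)
    (hVtint : Integrable (fun ω => Vt (X' ω)) P)
    {Zb : Ω → ι → ℝ} (hZb : ∀ ω, Zb ω = (S (X ω))ᵀ *ᵥ grad Vt (Xb ω))
    {Mb : Ω → Matrix ι ι ℝ} (hMb : ∀ ω, Mb ω = (S (X ω))ᵀ * hess Vt (Xb ω) * S (X ω))
    {δVt : Ω → ℝ} (hδVt : ∀ ω, δVt ω = V' (X' ω) - Vt (X' ω))
    {ΔY : Ω → ℝ} (hΔY : ∀ ω, ΔY ω = V' (X' ω) - V (X ω))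
    {Z : Ω → ι → ℝ} {ΔYhat : Ω → ℝ} (hΔYhat : ∀ ω, ΔYhat ω = -L (X ω) + ∑ i, Z ω i * W ω i) :
    (fun ω => ΔY ω - ΔYhat ω) =ᵐ[P]
      (fun ω => δVt ω - (P[δVt|𝒢]) ω + (∑ i, (Zb ω i - Z ω i) * W ω i)
        + (1 / 2) * Matrix.trace (Mb ω * (Matrix.vecMulVec (W ω) (W ω) - 1))) := by
  subst hWlaw
  obtain rfl : Vt = quadraticFn c b A := funext hVtquad
  obtain rfl : Xb = fun ω => X ω + F (X ω) := funext hXb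
  obtain rfl : X' = fun ω => eulerStep F S (X ω) (W ω) := funext hX'
  obtain rfl : δVt = (fun ω => V' (eulerStep F S (X ω) (W ω))) -
      fun ω => quadraticFn c b A (eulerStep F S (X ω) (W ω)) := funext hδVt
  have : IsProbabilityMeasure (P.map W) := Measure.isProbabilityMeasure_map hW.aemeasurable
  have hcondV' := condExp_comp_eulerStep h𝒢 hW hindep hX hF hS hV'meas hV'int
  have hcondVt := condExp_comp_eulerStep h𝒢 hW hindep hX hF hS
    (contDiff_quadraticFn c b A (k := 0)).continuous.measurable hVtint
  filter_upwards [condExp_sub hV'int hVtint 𝒢, hcondV', hcondVt] with ω hδ hωV' hωVt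
  have hbellman : V (X ω) = L (X ω) + ∫ w, V' (eulerStep F S (X ω) w) ∂(P.map W) := hV (X ω)
  have htaylor : quadraticFn c b A (eulerStep F S (X ω) (W ω)) = _ :=
    quadraticFn_add_mulVec c b A (X ω + F (X ω)) (S (X ω)) (W ω)
  have hdiff : ∑ i, (Zb ω i - Z ω i) * W ω i = Zb ω ⬝ᵥ W ω - ∑ i, Z ω i * W ω i :=
    sub_dotProduct _ _ _
  rw [hδ, Pi.sub_apply, Pi.sub_apply, hωV', hωVt, hμ.integral_quadraticFn_eulerStep, hΔY, hΔYhat,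
    hbellman, htaylor, hdiff, trace_mul_vecMulVec_self_sub_one, hZb, hMb]
  ring

end EulerMaruyama

/-- **Residual error of the Euler–Maruyama estimator under a quadratic approximation.**
If the value-function approximation `Ṽ` is quadratic, `Ṽ(x) = c + ⟨b,x⟩ + ½⟨x,Ax⟩` with `A`
symmetric, `Z̃ := Σ(X)ᵀ∇Ṽ(X')`, and `ΔŶ^em := −L(X) + ⟨Z̃,W⟩` is the Euler–Maruyama estimator,
then almost surely
`ΔY − ΔŶ^em = δ^Ṽ − E[δ^Ṽ|𝒢] + ⟨Z̄ − Z̃, W⟩ + ½ tr(M̄ (W Wᵀ − I))`. -/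
theorem euler_maruyama_residual_quadratic
    {Ω : Type*} (𝒢 : MeasurableSpace Ω) [mΩ : MeasurableSpace Ω]
    (P : Measure Ω) [IsProbabilityMeasure P]
    {n : ℕ} (h𝒢 : 𝒢 ≤ mΩ)
    -- the noise W : i.i.d. standard normal coordinates, independent of 𝒢
    (W : Ω → Fin n → ℝ) (hWmeas : Measurable W)
    (hWlaw : Measure.map W P = stdGaussian n)
    (hWindep : Indep (MeasurableSpace.comap W inferInstance) 𝒢 P)
    -- the current state X is 𝒢-measurable; dynamics data F, Σ, L
    (X : Ω → Fin n → ℝ) (hX : Measurable[𝒢] X)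
    (F : (Fin n → ℝ) → Fin n → ℝ) (hF : Measurable F)
    (S : (Fin n → ℝ) → Matrix (Fin n) (Fin n) ℝ) (hS : ∀ i j, Measurable fun x => S x i j)
    (L : (Fin n → ℝ) → ℝ) (hL : Measurable L)
    -- X̄ := X + F(X), X' := X̄ + Σ(X) W
    (Xb : Ω → Fin n → ℝ) (hXb : ∀ ω, Xb ω = X ω + F (X ω))
    (X' : Ω → Fin n → ℝ) (hX' : ∀ ω, X' ω = Xb ω + (S (X ω)).mulVec (W ω))
    -- the next-step value function V' and the one-step Bellman value V
    (V' : (Fin n → ℝ) → ℝ) (hV'meas : Measurable V')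
    (hV'int : Integrable (fun ω => V' (X' ω)) P)
    (V : (Fin n → ℝ) → ℝ)
    (hV : ∀ x, V x = L x + ∫ w, V' (x + F x + (S x).mulVec w) ∂(stdGaussian n))
    -- the quadratic value function approximation Ṽ(x) = c + ⟨b,x⟩ + ½⟨x,Ax⟩, A symmetric
    (Vt : (Fin n → ℝ) → ℝ)
    (c : ℝ) (b : Fin n → ℝ) (A : Matrix (Fin n) (Fin n) ℝ) (hA : A.IsSymm)
    (hVtquad : ∀ x, Vt x = c + (∑ i, b i * x i) + (1 / 2) * ∑ i, x i * A.mulVec x i)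
    (hVtint : Integrable (fun ω => Vt (X' ω)) P)
    -- the associated Z̄, M̄ and the Euler–Maruyama gradient term Z̃ := Σ(X)ᵀ∇Ṽ(X')
    (Zb : Ω → Fin n → ℝ) (hZb : ∀ ω, Zb ω = (S (X ω))ᵀ.mulVec (grad Vt (Xb ω)))
    (Mb : Ω → Matrix (Fin n) (Fin n) ℝ)
    (hMb : ∀ ω, Mb ω = (S (X ω))ᵀ * hess Vt (Xb ω) * S (X ω))
    (Zt : Ω → Fin n → ℝ) (hZt : ∀ ω, Zt ω = (S (X ω))ᵀ.mulVec (grad Vt (X' ω)))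
    (hZbint : ∀ i, Integrable (fun ω => Zb ω i) P)
    (hMbint : ∀ i j, Integrable (fun ω => Mb ω i j) P)
    (hZtint : ∀ i, Integrable (fun ω => Zt ω i) P)
    -- the representation error δ^Ṽ
    (δVt : Ω → ℝ) (hδVt : ∀ ω, δVt ω = V' (X' ω) - Vt (X' ω))
    -- the true backward difference ΔY and the Euler–Maruyama estimator ΔŶ^em
    (ΔY : Ω → ℝ) (hΔY : ∀ ω, ΔY ω = V' (X' ω) - V (X ω))
    (ΔYem : Ω → ℝ)
    (hΔYem : ∀ ω, ΔYem ω = -L (X ω) + ∑ i, Zt ω i * W ω i)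
    -- integrability of all displayed random variables
    (hΔYint : Integrable ΔY P) (hΔYemint : Integrable ΔYem P)
    (hδVtint : Integrable δVt P)
    (hLint : Integrable (fun ω => L (X ω)) P)
    (hVint : Integrable (fun ω => V (X ω)) P) :
    (fun ω => ΔY ω - ΔYem ω) =ᵐ[P]
      (fun ω => δVt ω - (P[δVt|𝒢]) ω + (∑ i, (Zb ω i - Zt ω i) * W ω i)
        + (1 / 2) * Matrix.trace (Mb ω * (Matrix.vecMulVec (W ω) (W ω) - 1))) := by
  exact euler_maruyama_residual_quadratic_general h𝒢 hWmeas hWlaw (isStandardized_stdGaussian n)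
    hWindep hX hF hS hXb hX' hV'meas hV'int hV hVtquad hVtint hZb hMb hδVt hΔY hΔYem
end

section
/- With the one-step Bellman setup and assuming square-integrability of all displayed random variables, the conditional variances of the two estimators satisfy, almost surely, Var[Ŷ^noiseless | 𝒢] = 0 and Var[Ŷ^re-est | 𝒢] = Var[δ^hot | 𝒢], where Ŷ^re-est := Ṽ(X') − ΔŶ, Ŷ^noiseless := L(X) + Ȳ + ½ tr(M̄), and Var[ξ | 𝒢] := E[(ξ − E[ξ|𝒢])² | 𝒢]. -/
open MeasureTheory ProbabilityTheory Matrix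

/-!
The quadratic part of `ΔŶ` is `½ tr(M̄(WWᵀ - I)) = ½⟨W, M̄W⟩ - ½ tr M̄`, so in `Ṽ(X') - ΔŶ` the
terms in `W` are exactly those of the Taylor polynomial subtracted in `δ^hot`, which gives the
pointwise identity `Ŷ^re-est = δ^hot + Ŷ^noiseless`. The noiseless estimator is `𝒢`-measurable, and
adding an integrable `𝒢`-measurable variable leaves a conditional variance unchanged.
-/

theorem trace_mul_vecMulVec_sub_one {ι R : Type*} [Fintype ι] [DecidableEq ι] [CommRing R]
    (M : Matrix ι ι R) (v w : ι → R) :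
    (M * (vecMulVec v w - 1)).trace = w ⬝ᵥ M *ᵥ v - M.trace := by
  rw [Matrix.mul_sub, Matrix.mul_one, trace_sub, mul_vecMulVec, trace_vecMulVec, dotProduct_comm]

theorem measurable_matrix_mul_apply {α l m n R : Type*} {_ : MeasurableSpace α} [Fintype m]
    [MeasurableSpace R] [NonUnitalNonAssocSemiring R] [MeasurableAdd₂ R] [MeasurableMul₂ R]
    {A : α → Matrix l m R} {B : α → Matrix m n R}
    (hA : ∀ i j, Measurable fun a => A a i j) (hB : ∀ i j, Measurable fun a => B a i j)
    (i : l) (j : n) : Measurable fun a => (A a * B a) i j := by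
  simp only [mul_apply]
  exact Finset.measurable_fun_sum _ fun k _ => (hA i k).mul (hB k j)

theorem measurable_hess_apply {n : ℕ} (f : (Fin n → ℝ) → ℝ) (i j : Fin n) :
    Measurable fun x => hess f x i j :=
  measurable_fderiv_apply_const ℝ _ _

theorem measurable_transpose_mul_hess_mul_apply {α ι : Type*} {_ : MeasurableSpace α} {n : ℕ}
    (f : (Fin n → ℝ) → ℝ) {x : α → Fin n → ℝ} (hx : Measurable x)
    {A : α → Matrix (Fin n) ι ℝ} (hA : ∀ i j, Measurable fun a => A a i j) (i j : ι) :
    Measurable fun a => ((A a)ᵀ * hess f (x a) * A a) i j :=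
  have hAt_mul_hess := measurable_matrix_mul_apply (fun i j => hA j i)
    fun i j => (measurable_hess_apply f i j).comp hx
  measurable_matrix_mul_apply hAt_mul_hess hA i j

section ConditionalVariance

variable {Ω : Type*} {m m₀ : MeasurableSpace Ω} {μ : Measure Ω} {X Y : Ω → ℝ}

theorem condVar_add_of_aestronglyMeasurable_right (hm : m ≤ m₀) [SigmaFinite (μ.trim hm)]
    (hX : Integrable X μ) (hYm : AEStronglyMeasurable[m] Y μ)
    (hY : Integrable Y μ) : Var[X + Y; μ | m] =ᵐ[μ] Var[X; μ | m] := by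
  have centered_eq : (X + Y - μ[X + Y | m]) ^ 2 =ᵐ[μ] (X - μ[X | m]) ^ 2 := by
    filter_upwards [condExp_add hX hY m, condExp_of_aestronglyMeasurable' hm hYm hY] with ω hadd hYω
    simp only [Pi.pow_apply, Pi.sub_apply, hadd, Pi.add_apply, hYω, add_sub_add_right_eq_sub]
  exact condExp_congr_ae centered_eq

theorem condVar_ae_eq_zero_of_aestronglyMeasurable (hm : m ≤ m₀) [SigmaFinite (μ.trim hm)]
    (hYm : AEStronglyMeasurable[m] Y μ) (hY : Integrable Y μ) :
    Var[Y; μ | m] =ᵐ[μ] 0 := by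
  simpa only [zero_add, condVar_zero] using
    condVar_add_of_aestronglyMeasurable_right hm (integrable_zero Ω ℝ μ) hYm hY

end ConditionalVariance

/-- `ℓ`, `Y`, `Z`, `M`, `V'` play the roles of `L(X)`, `Ȳ`, `Z̄`, `M̄`, `Ṽ(X')`. -/
theorem reestimate_noiseless_variance_general
    {Ω ι : Type*} [Fintype ι] [DecidableEq ι] {𝒢 mΩ : MeasurableSpace Ω} {P : Measure Ω}
    (h𝒢 : 𝒢 ≤ mΩ) [SigmaFinite (P.trim h𝒢)]
    {W Z : Ω → ι → ℝ} {M : Ω → Matrix ι ι ℝ} {ℓ Y V' δhot ΔY Yre Ynl : Ω → ℝ}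
    (hℓ : Measurable[𝒢] ℓ) (hY : Measurable[𝒢] Y) (hM : ∀ i j, Measurable[𝒢] fun ω => M ω i j)
    (hδhot : ∀ ω, δhot ω = V' ω - (Y ω + Z ω ⬝ᵥ W ω + (1 / 2) * (W ω ⬝ᵥ M ω *ᵥ W ω)))
    (hΔY : ∀ ω, ΔY ω = -ℓ ω + Z ω ⬝ᵥ W ω
      + (1 / 2) * (M ω * (vecMulVec (W ω) (W ω) - 1)).trace)
    (hYre : ∀ ω, Yre ω = V' ω - ΔY ω)
    (hYnl : ∀ ω, Ynl ω = ℓ ω + Y ω + (1 / 2) * (M ω).trace)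
    (hδhot_int : Integrable δhot P) (hYnl_int : Integrable Ynl P) :
    Var[Ynl; P | 𝒢] =ᵐ[P] 0 ∧ Var[Yre; P | 𝒢] =ᵐ[P] Var[δhot; P | 𝒢] := by
  have hYnl_meas : Measurable[𝒢] Ynl := by
    rw [funext hYnl]
    exact (hℓ.add hY).add ((Finset.measurable_fun_sum _ fun i _ => hM i i).const_mul _)
  have hYnl_aesm : AEStronglyMeasurable[𝒢] Ynl P :=
    hYnl_meas.stronglyMeasurable.aestronglyMeasurable
  have hYre_eq : Yre = δhot + Ynl := by
    funext ω
    rw [Pi.add_apply, hYre, hΔY, hδhot, hYnl, trace_mul_vecMulVec_sub_one]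
    ring
  rw [hYre_eq]
  exact ⟨condVar_ae_eq_zero_of_aestronglyMeasurable h𝒢 hYnl_aesm hYnl_int,
    condVar_add_of_aestronglyMeasurable_right h𝒢 hδhot_int hYnl_aesm hYnl_int⟩

/-- **Conditional variances of the noiseless and re-estimate estimators.**
With the one-step Bellman setup and square-integrability of the displayed random variables,
almost surely `Var[Ŷ^noiseless | 𝒢] = 0` and `Var[Ŷ^re-est | 𝒢] = Var[δ^hot | 𝒢]`, where
`Var[ξ|𝒢] := E[(ξ − E[ξ|𝒢])²|𝒢]`. -/
theorem reestimate_noiseless_variance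
    {Ω : Type*} (𝒢 : MeasurableSpace Ω) [mΩ : MeasurableSpace Ω]
    (P : Measure Ω) [IsProbabilityMeasure P]
    {n : ℕ} (h𝒢 : 𝒢 ≤ mΩ)
    -- the noise W : i.i.d. standard normal coordinates, independent of 𝒢
    (W : Ω → Fin n → ℝ) (hWmeas : Measurable W)
    (hWlaw : Measure.map W P = stdGaussian n)
    (hWindep : Indep (MeasurableSpace.comap W inferInstance) 𝒢 P)
    -- the current state X is 𝒢-measurable; dynamics data F, Σ, L
    (X : Ω → Fin n → ℝ) (hX : Measurable[𝒢] X)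
    (F : (Fin n → ℝ) → Fin n → ℝ) (hF : Measurable F)
    (S : (Fin n → ℝ) → Matrix (Fin n) (Fin n) ℝ) (hS : ∀ i j, Measurable fun x => S x i j)
    (L : (Fin n → ℝ) → ℝ) (hL : Measurable L)
    -- X̄ := X + F(X), X' := X̄ + Σ(X) W
    (Xb : Ω → Fin n → ℝ) (hXb : ∀ ω, Xb ω = X ω + F (X ω))
    (X' : Ω → Fin n → ℝ) (hX' : ∀ ω, X' ω = Xb ω + (S (X ω)).mulVec (W ω))
    -- the C² value function approximation Ṽ and associated Ȳ, Z̄, M̄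
    (Vt : (Fin n → ℝ) → ℝ) (hVt : ContDiff ℝ 2 Vt)
    (Zb : Ω → Fin n → ℝ) (hZb : ∀ ω, Zb ω = (S (X ω))ᵀ.mulVec (grad Vt (Xb ω)))
    (Mb : Ω → Matrix (Fin n) (Fin n) ℝ)
    (hMb : ∀ ω, Mb ω = (S (X ω))ᵀ * hess Vt (Xb ω) * S (X ω))
    -- the Taylor remainder δ^hot
    (δhot : Ω → ℝ)
    (hδhot : ∀ ω, δhot ω = Vt (X' ω) - (Vt (Xb ω) + (∑ i, Zb ω i * W ω i)
      + (1 / 2) * ∑ i, W ω i * (Mb ω).mulVec (W ω) i))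
    -- the Taylor estimator ΔŶ and the re-estimate and noiseless estimators
    (ΔYh : Ω → ℝ)
    (hΔYh : ∀ ω, ΔYh ω = -L (X ω) + (∑ i, Zb ω i * W ω i)
      + (1 / 2) * Matrix.trace (Mb ω * (Matrix.vecMulVec (W ω) (W ω) - 1)))
    (Yre : Ω → ℝ) (hYre : ∀ ω, Yre ω = Vt (X' ω) - ΔYh ω)
    (Ynl : Ω → ℝ)
    (hYnl : ∀ ω, Ynl ω = L (X ω) + Vt (Xb ω) + (1 / 2) * Matrix.trace (Mb ω))
    -- square-integrability of all displayed random variables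
    (hYre2 : MemLp Yre 2 P) (hYnl2 : MemLp Ynl 2 P) (hδhot2 : MemLp δhot 2 P)
    (hΔYh2 : MemLp ΔYh 2 P) (hVtX'2 : MemLp (fun ω => Vt (X' ω)) 2 P)
    (hVtXb2 : MemLp (fun ω => Vt (Xb ω)) 2 P) (hL2 : MemLp (fun ω => L (X ω)) 2 P)
    (hZb2 : ∀ i, MemLp (fun ω => Zb ω i) 2 P)
    (hMb2 : ∀ i j, MemLp (fun ω => Mb ω i j) 2 P) :
    P[fun ω => (Ynl ω - (P[Ynl|𝒢]) ω) ^ 2|𝒢] =ᵐ[P] 0 ∧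
      P[fun ω => (Yre ω - (P[Yre|𝒢]) ω) ^ 2|𝒢]
        =ᵐ[P] P[fun ω => (δhot ω - (P[δhot|𝒢]) ω) ^ 2|𝒢] := by
  have hXb_meas : Measurable[𝒢] Xb := funext hXb ▸ hX.add (hF.comp hX)
  have hMb_meas : ∀ i j, Measurable[𝒢] fun ω => Mb ω i j := by
    simp only [hMb]
    exact measurable_transpose_mul_hess_mul_apply Vt hXb_meas fun i j => (hS i j).comp hX
  exact reestimate_noiseless_variance_general h𝒢 (hL.comp hX)
    (hVt.continuous.measurable.comp hXb_meas) hMb_meas hδhot hΔYh hYre hYnl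
    (hδhot2.integrable one_le_two) (hYnl2.integrable one_le_two)
end
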